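/- For m = 4 marked vertices on any graph G, the identity Φ_{(1,1,1,1)} Φ_{(1,2,3,4)} = A_5(B_1+B_3+B_5+B_7) + A_1(B_3+B_7) + A_3(B_3+B_5) holds, where A_1 = Φ_{(1,1,2,3)}, A_3 = Φ_{(1,2,2,3)}, A_5 = Φ_{(1,2,3,2)}, B_1 = Φ_{(1,1,1,2)}, B_3 = Φ_{(1,2,1,1)}, B_5 = Φ_{(1,1,2,2)}, B_7 = Φ_{(1,2,2,1)}. -/

import Mathlib

open Finset

/-- A finite edge set `F` is a spanning forest of `G` compatible with the set partition of
(a subset of) the marked vertices `v : Fin m → V` encoded by `p : Fin m → Option ℕ`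
(`p i = none` means vertex `i` is unconstrained, `p i = some ℓ` means vertex `i` lies in
the part labelled `ℓ`): the edges of `F` lie in `G`, `F` is acyclic, two constrained
marked vertices lie in the same tree iff they have the same label, and every vertex of
the graph lies in the tree of some constrained marked vertex (so the trees of the forest
are in bijection with the parts of the partition). -/
def IsCompatibleForest {V : Type*} [Fintype V] [DecidableEq V] (G : SimpleGraph V) {m : ℕ}
    (v : Fin m → V) (p : Fin m → Option ℕ) (F : Finset (Sym2 V)) : Prop :=
  (F : Set (Sym2 V)) ⊆ G.edgeSet ∧
  (SimpleGraph.fromEdgeSet (F : Set (Sym2 V))).IsAcyclic ∧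
  (∀ i j : Fin m, p i ≠ none → p j ≠ none →
    ((SimpleGraph.fromEdgeSet (F : Set (Sym2 V))).Reachable (v i) (v j) ↔ p i = p j)) ∧
  (∀ w : V, ∃ i : Fin m, p i ≠ none ∧
    (SimpleGraph.fromEdgeSet (F : Set (Sym2 V))).Reachable w (v i))

/-- The spanning forest polynomial `Φ_P = Σ_{F ∼ P} Π_{e ∉ F} x_e` of the graph `G` with
edge variables `x`, marked vertices `v`, and partition `P` encoded by `p`. -/
noncomputable def forestPoly {V : Type*} [Fintype V] [DecidableEq V] {R : Type*}
    [CommRing R] (G : SimpleGraph V) [DecidableRel G.Adj] (x : Sym2 V → R) {m : ℕ}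
    (v : Fin m → V) (p : Fin m → Option ℕ) : R :=
  ∑ F ∈ G.edgeFinset.powerset,
    (letI := Classical.dec (IsCompatibleForest G v p F)
     if IsCompatibleForest G v p F then ∏ e ∈ G.edgeFinset \ F, x e else 0)

namespace L44

/-- Being connected through the edge set `F`. -/
def Conn {V : Type*} (F : Finset (Sym2 V)) (a b : V) : Prop :=
  (SimpleGraph.fromEdgeSet (F : Set (Sym2 V))).Reachable a b

/-- `F` is a spanning forest with exactly one root from `S` in each tree. -/
def RF {V : Type*} (S : Finset V) (F : Finset (Sym2 V)) : Prop :=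
  (SimpleGraph.fromEdgeSet (F : Set (Sym2 V))).IsAcyclic ∧
  (∀ s ∈ S, ∀ t ∈ S, Conn F s t → s = t) ∧ ∀ w, ∃ s ∈ S, Conn F w s

section
variable {V : Type*} {F g : Finset (Sym2 V)} {a b c u : V}

lemma Conn.rfl' : Conn F a a := SimpleGraph.Reachable.refl a
lemma Conn.symm (h : Conn F a b) : Conn F b a := SimpleGraph.Reachable.symm h
lemma Conn.trans (h : Conn F a b) (h' : Conn F b c) : Conn F a c := SimpleGraph.Reachable.trans h h'
lemma Conn.mono (hs : g ⊆ F) (h : Conn g a b) : Conn F a b :=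
  SimpleGraph.Reachable.mono (SimpleGraph.fromEdgeSet_mono (by exact_mod_cast hs)) h
lemma Conn.of_mem (h : s(a, b) ∈ F) : Conn F a b := by
  by_cases hab : a = b
  · subst hab; exact Conn.rfl'
  · exact SimpleGraph.Adj.reachable ((SimpleGraph.fromEdgeSet_adj _).2 ⟨by exact_mod_cast h, hab⟩)

variable [DecidableEq V]

lemma Conn.insert_cases (h : Conn (insert s(u, a) g) b c) :
    Conn g b c ∨ (Conn g b u ∧ Conn g a c) ∨ (Conn g b a ∧ Conn g u c) := by
  obtain ⟨p⟩ := h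
  induction p with
  | nil => exact Or.inl Conn.rfl'
  | @cons x y z hxy p ih =>
    have hxy' := ((SimpleGraph.fromEdgeSet_adj _).1 hxy).1
    simp only [Finset.coe_insert, Set.mem_insert_iff, Finset.mem_coe] at hxy'
    rcases hxy' with h | h
    · rw [Sym2.eq_iff] at h
      rcases h with ⟨rfl, rfl⟩ | ⟨rfl, rfl⟩
      · rcases ih with h | ⟨h, h'⟩ | ⟨h, h'⟩
        · exact Or.inr (Or.inl ⟨Conn.rfl', h⟩)
        · exact Or.inr (Or.inl ⟨Conn.rfl', h'⟩)
        · exact Or.inl h'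
      · rcases ih with h | ⟨h, h'⟩ | ⟨h, h'⟩
        · exact Or.inr (Or.inr ⟨Conn.rfl', h⟩)
        · exact Or.inl h'
        · exact Or.inr (Or.inr ⟨Conn.rfl', h'⟩)
    · have := Conn.of_mem h
      rcases ih with h | ⟨h, h'⟩ | ⟨h, h'⟩
      · exact Or.inl (this.trans h)
      · exact Or.inr (Or.inl ⟨this.trans h, h'⟩)
      · exact Or.inr (Or.inr ⟨this.trans h, h'⟩)

lemma conn_insert : Conn (insert s(u, a) g) b c ↔
    Conn g b c ∨ (Conn g b u ∧ Conn g a c) ∨ (Conn g b a ∧ Conn g u c) := by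
  have hi : Conn (insert s(u, a) g) u a := Conn.of_mem (Finset.mem_insert_self _ _)
  have hs := Finset.subset_insert s(u, a) g
  refine ⟨Conn.insert_cases, ?_⟩
  rintro (h | ⟨h, h'⟩ | ⟨h, h'⟩)
  · exact h.mono hs
  · exact (h.mono hs).trans (hi.trans (h'.mono hs))
  · refine (h.mono hs).trans (hi.symm.trans ?_)
    exact Conn.mono hs ‹Conn g u c›

/-- Adding the edge `ua`. -/
lemma RF.insert_edge {S : Finset V} (hu : u ∉ S) (h : RF (insert u S) g) (ha : ¬ Conn g a u) :
    RF S (insert s(u, a) g) := by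
  obtain ⟨h1, h2, h3⟩ := h
  refine ⟨?_, ?_, ?_⟩
  · have := (SimpleGraph.isAcyclic_add_edge_iff_of_not_reachable u a
      (G := SimpleGraph.fromEdgeSet (g : Set (Sym2 V))) (fun h => ha (Conn.symm h))).2 h1
    refine this.anti ?_
    intro x y hxy
    have := (SimpleGraph.fromEdgeSet_adj _).1 hxy
    simp only [Finset.coe_insert, Set.mem_insert_iff, Finset.mem_coe] at this
    rw [SimpleGraph.sup_adj, SimpleGraph.edge, SimpleGraph.fromEdgeSet_adj,
      SimpleGraph.fromEdgeSet_adj]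
    simp only [Set.mem_singleton_iff, Finset.mem_coe]
    tauto
  · intro s hs t ht hst
    have hs' : s ∈ insert u S := Finset.mem_insert_of_mem hs
    have ht' : t ∈ insert u S := Finset.mem_insert_of_mem ht
    have huu := Finset.mem_insert_self u S
    rcases conn_insert.1 hst with h | ⟨h, h'⟩ | ⟨h, h'⟩
    · exact h2 s hs' t ht' h
    · exact absurd (h2 s hs' u huu h ▸ hs) hu
    · exact absurd (h2 u huu t ht' h' ▸ ht) hu
  · have key : ∀ w, ¬ Conn g w u → ∃ s ∈ S, Conn g w s := by
      intro w hw
      obtain ⟨s, hs, hws⟩ := h3 w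
      rcases Finset.mem_insert.1 hs with rfl | hs
      · exact absurd hws hw
      · exact ⟨s, hs, hws⟩
    intro w
    by_cases hw : Conn g w u
    · obtain ⟨s, hs, has⟩ := key a ha
      exact ⟨s, hs, conn_insert.2 (Or.inr (Or.inl ⟨hw, has⟩))⟩
    · obtain ⟨s, hs, has⟩ := key w hw
      exact ⟨s, hs, conn_insert.2 (Or.inl has)⟩

/-- Removing the first edge on the path from `u` to its root. -/
lemma RF.exists_edge {S : Finset V} (hu : u ∉ S) (h : RF S F) :
    ∃ a g, u ≠ a ∧ s(u, a) ∉ g ∧ RF (insert u S) g ∧ ¬ Conn g a u ∧ F = insert s(u, a) g := by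
  obtain ⟨h1, h2, h3⟩ := h
  obtain ⟨r, hr, hur⟩ := h3 u
  obtain ⟨p, hp⟩ := SimpleGraph.Reachable.exists_isPath hur
  cases p with
  | nil => exact absurd hr hu
  | @cons _ a _ hua q =>
    have hmem := (SimpleGraph.fromEdgeSet_adj _).1 hua
    have hF : F = insert s(u, a) (F.erase s(u, a)) :=
      (Finset.insert_erase (by exact_mod_cast hmem.1)).symm
    have hdel : (SimpleGraph.fromEdgeSet (F : Set (Sym2 V))).deleteEdges {s(u, a)} =
        SimpleGraph.fromEdgeSet ((F.erase s(u, a) : Finset (Sym2 V)) : Set (Sym2 V)) := by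
      ext x y
      simp
    have hna : ¬ Conn (F.erase s(u, a)) a u := by
      have := SimpleGraph.isAcyclic_iff_forall_adj_isBridge.1 h1 hua
      rw [SimpleGraph.isBridge_iff, hdel] at this
      exact fun h => this (Conn.symm h)
    have har : Conn (F.erase s(u, a)) a r := by
      unfold Conn
      rw [← hdel, SimpleGraph.reachable_deleteEdges_iff_exists_walk]
      rw [SimpleGraph.Walk.cons_isPath_iff] at hp
      exact ⟨q, fun h => hp.2 (SimpleGraph.Walk.fst_mem_support_of_mem_edges _ h)⟩
    have hsub : F.erase s(u, a) ⊆ F := Finset.erase_subset _ _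
    have hus : ∀ s ∈ S, ¬ Conn (F.erase s(u, a)) u s := by
      intro s hs hc
      have : r = s := h2 r hr s hs ((Conn.symm hur).trans (hc.mono hsub))
      subst this
      exact hna (har.trans hc.symm)
    refine ⟨a, F.erase s(u, a), hmem.2, Finset.notMem_erase _ _, ⟨?_, ?_, ?_⟩, hna, hF⟩
    · exact h1.anti (SimpleGraph.fromEdgeSet_mono (by exact_mod_cast hsub))
    · intro s hs t ht hst
      rcases Finset.mem_insert.1 hs with hs | hs <;> rcases Finset.mem_insert.1 ht with ht | ht
      · rw [hs, ht]
      · exact absurd (hs ▸ hst) (hus t ht)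
      · exact absurd (ht ▸ hst.symm) (hus s hs)
      · exact h2 s hs t ht (hst.mono hsub)
    · intro w
      obtain ⟨s, hs, hws⟩ := h3 w
      rw [hF] at hws
      rcases conn_insert.1 hws with h | ⟨h, -⟩ | ⟨h, -⟩
      · exact ⟨s, Finset.mem_insert_of_mem hs, h⟩
      · exact ⟨u, Finset.mem_insert_self _ _, h⟩
      · exact ⟨r, Finset.mem_insert_of_mem hr, h.trans har⟩

lemma RF.unique_edge {S : Finset V} {g' : Finset (Sym2 V)} {a' : V} (hu : u ∉ S)
    (h : RF (insert u S) g) (ha : ¬ Conn g a u)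
    (h' : RF (insert u S) g') (ha' : ¬ Conn g' a' u)
    (he : insert s(u, a) g = insert s(u, a') g') : a = a' ∧ g = g' := by
  have hn : s(u, a) ∉ g := fun h => ha (Conn.of_mem h).symm
  have hn' : s(u, a') ∉ g' := fun h => ha' (Conn.of_mem h).symm
  have haa : a = a' := by
    by_contra hne
    have hne' : s(u, a') ≠ s(u, a) := by
      intro h; exact hne (Sym2.congr_right.1 h).symm
    have hm : s(u, a') ∈ g := by
      have : s(u, a') ∈ insert s(u, a) g := he ▸ Finset.mem_insert_self _ _
      exact (Finset.mem_insert.1 this).resolve_left hne'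
    have hm' : s(u, a) ∈ g' := by
      have : s(u, a) ∈ insert s(u, a') g' := he ▸ Finset.mem_insert_self _ _
      exact (Finset.mem_insert.1 this).resolve_left hne'.symm
    obtain ⟨r, hr, har⟩ := h'.2.2 a'
    have hru : r ≠ u := by rintro rfl; exact ha' har
    have hsub : g'.erase s(u, a) ⊆ g := by
      intro e he1
      have h1 := Finset.mem_erase.1 he1
      have : e ∈ insert s(u, a) g := he ▸ Finset.mem_insert_of_mem h1.2
      exact (Finset.mem_insert.1 this).resolve_left h1.1
    have hsub' : g'.erase s(u, a) ⊆ g' := Finset.erase_subset _ _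
    rw [← Finset.insert_erase hm'] at har
    have hua' : Conn g u a' := Conn.of_mem hm
    rcases conn_insert.1 har with h1 | ⟨h1, -⟩ | ⟨h1, -⟩
    · exact hru (h.2.1 u (Finset.mem_insert_self _ _) r hr (hua'.trans (h1.mono hsub))).symm
    · exact ha' (h1.mono hsub')
    · exact ha (hua'.trans (h1.mono hsub)).symm
  subst haa
  refine ⟨rfl, ?_⟩
  rw [← Finset.erase_insert hn, he, Finset.erase_insert hn']

end

section
variable {V : Type*} [Fintype V] [DecidableEq V] {R : Type*} [CommRing R]

open Classical in
/-- Weighted sum over edge sets satisfying `P`. -/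
noncomputable def WS (G : SimpleGraph V) [DecidableRel G.Adj] (y : Sym2 V → R)
    (P : Finset (Sym2 V) → Prop) : R :=
  ∑ F ∈ G.edgeFinset.powerset, if P F then ∏ e ∈ F, y e else 0

/-- Conductance matrix. -/
def W (G : SimpleGraph V) [DecidableRel G.Adj] (y : Sym2 V → R) (u a : V) : R :=
  if G.Adj u a then y s(u, a) else 0

variable (G : SimpleGraph V) [DecidableRel G.Adj] (y : Sym2 V → R)

lemma W_comm (u a : V) : W G y u a = W G y a u := by
  unfold W; rw [Sym2.eq_swap]; simp only [G.adj_comm u a]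

lemma WS_congr {P Q : Finset (Sym2 V) → Prop} (h : ∀ F, P F ↔ Q F) : WS G y P = WS G y Q := by
  have : P = Q := funext fun F => propext (h F)
  rw [this]

lemma WS_add {P Q T : Finset (Sym2 V) → Prop} (h : ∀ F, T F ↔ P F ∨ Q F)
    (hd : ∀ F, P F → ¬ Q F) : WS G y T = WS G y P + WS G y Q := by
  classical
  unfold WS
  rw [← Finset.sum_add_distrib]
  refine Finset.sum_congr rfl fun F _ => ?_
  have h1 := h F
  have h2 := hd F
  by_cases hp : P F <;> by_cases hq : Q F <;> simp_all

open Classical in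
lemma WS_filter (P : Finset (Sym2 V) → Prop) :
    WS G y P = ∑ F ∈ G.edgeFinset.powerset.filter P, ∏ e ∈ F, y e := by
  rw [Finset.sum_filter]; rfl

/-- Decomposition of rooted forests according to the parent of `u`. -/
lemma WS_decomp {S : Finset V} {u : V} (hu : u ∉ S) (Q : Finset (Sym2 V) → Prop) :
    WS G y (fun F => RF S F ∧ Q F) = ∑ a, W G y u a *
      WS G y (fun g => RF (insert u S) g ∧ ¬ Conn g a u ∧ Q (insert s(u, a) g)) := by
  classical
  have hR : ∑ a, W G y u a *
      WS G y (fun g => RF (insert u S) g ∧ ¬ Conn g a u ∧ Q (insert s(u, a) g)) =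
      ∑ q ∈ (Finset.univ ×ˢ G.edgeFinset.powerset).filter
        (fun q : V × Finset (Sym2 V) => G.Adj u q.1 ∧ RF (insert u S) q.2 ∧ ¬ Conn q.2 q.1 u ∧
          Q (insert s(u, q.1) q.2)), y s(u, q.1) * ∏ e ∈ q.2, y e := by
    rw [Finset.sum_filter, Finset.sum_product]
    refine Finset.sum_congr rfl fun a _ => ?_
    unfold WS W
    rw [Finset.mul_sum]
    refine Finset.sum_congr rfl fun g _ => ?_
    by_cases h1 : G.Adj u a <;> simp [h1]
  rw [hR, WS_filter]
  symm
  refine Finset.sum_bij (fun q _ => insert s(u, q.1) q.2) ?_ ?_ ?_ ?_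
  · rintro ⟨a, g⟩ h
    simp only [Finset.mem_filter, Finset.mem_product, Finset.mem_univ, true_and,
      Finset.mem_powerset] at h ⊢
    obtain ⟨h1, h2, h3, h4, h5⟩ := h
    refine ⟨Finset.insert_subset ?_ h1, h3.insert_edge hu h4, h5⟩
    simpa using h2
  · rintro ⟨a, g⟩ h ⟨a', g'⟩ h' he
    simp only [Finset.mem_filter] at h h'
    obtain ⟨h1, h2⟩ := RF.unique_edge hu h.2.2.1 h.2.2.2.1 h'.2.2.1 h'.2.2.2.1 he
    simp [h1, h2]
  · intro F hF
    simp only [Finset.mem_filter, Finset.mem_powerset] at hF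
    obtain ⟨h1, h2, h3⟩ := hF
    obtain ⟨a, g, hne, hn, hg, ha, rfl⟩ := RF.exists_edge hu h2
    refine ⟨(a, g), ?_, rfl⟩
    simp only [Finset.mem_filter, Finset.mem_product, Finset.mem_univ, true_and,
      Finset.mem_powerset]
    refine ⟨fun e he => h1 (Finset.mem_insert_of_mem he), ?_, hg, ha, h3⟩
    simpa using h1 (Finset.mem_insert_self _ _)
  · rintro ⟨a, g⟩ h
    simp only [Finset.mem_filter] at h
    have : s(u, a) ∉ g := fun hm => h.2.2.2.1 (Conn.of_mem hm).symm
    simp only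
    rw [Finset.prod_insert this]

/-- The potential: forests rooted at `S` in which `w` is in the tree of `r`. -/
noncomputable def pot (S : Finset V) (r w : V) : R := WS G y (fun F => RF S F ∧ Conn F w r)

lemma pot_harmonic {S : Finset V} {r u : V} (hr : r ∈ S) (hu : u ∉ S) :
    ∑ w, W G y u w * (pot G y S r u - pot G y S r w) = 0 := by
  have hru : r ≠ u := fun h => hu (h ▸ hr)
  have hnot : ∀ g, RF (insert u S) g → ¬ Conn g u r := fun g hg h =>
    hru (hg.2.1 u (Finset.mem_insert_self _ _) r (Finset.mem_insert_of_mem hr) h).symm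
  have h1 : pot G y S r u = ∑ a, W G y u a * pot G y (insert u S) r a := by
    unfold pot
    rw [WS_decomp G y hu]
    refine Finset.sum_congr rfl fun a _ => ?_
    congr 1
    refine WS_congr G y fun g => ?_
    rw [conn_insert]
    constructor
    · rintro ⟨h1, h2, h3 | ⟨-, h3⟩ | ⟨-, h3⟩⟩
      · exact absurd h3 (hnot g h1)
      · exact ⟨h1, h3⟩
      · exact absurd h3 (hnot g h1)
    · rintro ⟨h1, h2⟩
      exact ⟨h1, fun h => hnot g h1 (h.symm.trans h2), Or.inr (Or.inl ⟨Conn.rfl', h2⟩)⟩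
  have h2 : ∀ w, pot G y S r w = ∑ a, W G y u a *
      (WS G y (fun g => RF (insert u S) g ∧ ¬ Conn g a u ∧ Conn g w r) +
       WS G y (fun g => RF (insert u S) g ∧ Conn g w u ∧ Conn g a r)) := by
    intro w
    unfold pot
    rw [WS_decomp G y hu]
    refine Finset.sum_congr rfl fun a _ => ?_
    congr 1
    refine WS_add G y (fun g => ?_) ?_
    · rw [conn_insert]
      constructor
      · rintro ⟨h1, h2, h3 | ⟨h3, h4⟩ | ⟨-, h3⟩⟩
        · exact Or.inl ⟨h1, h2, h3⟩
        · exact Or.inr ⟨h1, h3, h4⟩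
        · exact absurd h3 (hnot g h1)
      · rintro (⟨h1, h2, h3⟩ | ⟨h1, h2, h3⟩)
        · exact ⟨h1, h2, Or.inl h3⟩
        · exact ⟨h1, fun h => hnot g h1 (h.symm.trans h3), Or.inr (Or.inl ⟨h2, h3⟩)⟩
    · rintro g ⟨h1, h2, h3⟩ ⟨-, h4, h5⟩
      exact hnot g h1 (h4.symm.trans h3)
  have h3 : ∀ w a, pot G y (insert u S) r w =
      WS G y (fun g => RF (insert u S) g ∧ ¬ Conn g a u ∧ Conn g w r) +
      WS G y (fun g => RF (insert u S) g ∧ Conn g a u ∧ Conn g w r) := by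
    intro w a
    refine WS_add G y (fun g => ?_) ?_
    · tauto
    · rintro g ⟨h1, h2, h3⟩ ⟨-, h4, h5⟩
      exact h2 h4
  have e1 : ∑ w, W G y u w * pot G y S r u =
      ∑ w, ∑ a, W G y u w * (W G y u a * pot G y (insert u S) r w) := by
    rw [Finset.sum_comm]
    refine Finset.sum_congr rfl fun w _ => ?_
    rw [h1, Finset.mul_sum]
    refine Finset.sum_congr rfl fun a _ => ?_
    ring
  have e2 : ∑ w, W G y u w * pot G y S r w =
      ∑ w, ∑ a, W G y u w * (W G y u a * pot G y (insert u S) r w) := by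
    have ea : ∑ w, W G y u w * pot G y S r w =
        ∑ w, ∑ a, W G y u w * (W G y u a *
          WS G y (fun g => RF (insert u S) g ∧ ¬ Conn g a u ∧ Conn g w r)) +
        ∑ w, ∑ a, W G y u w * (W G y u a *
          WS G y (fun g => RF (insert u S) g ∧ Conn g w u ∧ Conn g a r)) := by
      rw [← Finset.sum_add_distrib]
      refine Finset.sum_congr rfl fun w _ => ?_
      rw [← Finset.sum_add_distrib, h2, Finset.mul_sum]
      refine Finset.sum_congr rfl fun a _ => ?_
      ring
    rw [ea, Finset.sum_comm (f := fun w a => W G y u w * (W G y u a *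
          WS G y (fun g => RF (insert u S) g ∧ Conn g w u ∧ Conn g a r))),
      ← Finset.sum_add_distrib]
    refine Finset.sum_congr rfl fun w _ => ?_
    rw [← Finset.sum_add_distrib]
    refine Finset.sum_congr rfl fun a _ => ?_
    rw [h3 w a]
    ring
  simp only [mul_sub, Finset.sum_sub_distrib]
  rw [e1, e2, sub_self]

/-- Current at a root. -/
lemma pot_current {S : Finset V} {r u : V} (hr : r ∈ S) (hu : u ∉ S) :
    ∑ a, W G y u a * pot G y (insert u S) r a = WS G y (fun F => RF S F ∧ Conn F u r) := by
  have hru : r ≠ u := fun h => hu (h ▸ hr)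
  have hnot : ∀ g, RF (insert u S) g → ¬ Conn g u r := fun g hg h =>
    hru (hg.2.1 u (Finset.mem_insert_self _ _) r (Finset.mem_insert_of_mem hr) h).symm
  unfold pot
  rw [WS_decomp G y hu]
  refine Finset.sum_congr rfl fun a _ => ?_
  congr 1
  refine WS_congr G y fun g => ?_
  rw [conn_insert]
  constructor
  · rintro ⟨h1, h2⟩
    exact ⟨h1, fun h => hnot g h1 (h.symm.trans h2), Or.inr (Or.inl ⟨Conn.rfl', h2⟩)⟩
  · rintro ⟨h1, h2, h3 | ⟨-, h3⟩ | ⟨-, h3⟩⟩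
    · exact absurd h3 (hnot g h1)
    · exact ⟨h1, h3⟩
    · exact absurd h3 (hnot g h1)

lemma pot_zero {S : Finset V} {r u : V} (hr : r ∈ S) (hu : u ∈ S) (h : u ≠ r) :
    pot G y S r u = 0 := by
  classical
  unfold pot WS
  refine Finset.sum_eq_zero fun F _ => if_neg ?_
  rintro ⟨h1, h2⟩
  exact h (h1.2.1 u hu r hr h2)

lemma pot_root_current {S : Finset V} {r u : V} (hr : r ∈ S) (hu : u ∉ S) :
    ∑ a, W G y u a * (pot G y (insert u S) r u - pot G y (insert u S) r a) =
      - WS G y (fun F => RF S F ∧ Conn F u r) := by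
  have hru : r ≠ u := fun h => hu (h ▸ hr)
  rw [pot_zero G y (Finset.mem_insert_of_mem hr) (Finset.mem_insert_self _ _) hru.symm,
    ← pot_current G y hr hu, ← Finset.sum_neg_distrib]
  exact Finset.sum_congr rfl fun a _ => by ring

lemma green (f h : V → R) :
    ∑ u, f u * ∑ a, W G y u a * (h u - h a) = ∑ u, h u * ∑ a, W G y u a * (f u - f a) := by
  have key : ∀ f h : V → R, ∑ u, f u * ∑ a, W G y u a * (h u - h a) =
      ∑ u, ∑ a, W G y u a * (f u * h u) - ∑ u, ∑ a, W G y u a * (f u * h a) := by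
    intro f h
    rw [← Finset.sum_sub_distrib]
    refine Finset.sum_congr rfl fun u _ => ?_
    rw [← Finset.sum_sub_distrib, Finset.mul_sum]
    exact Finset.sum_congr rfl fun a _ => by ring
  rw [key, key, Finset.sum_comm (f := fun u a => W G y u a * (f u * h a))]
  congr 1
  · exact Finset.sum_congr rfl fun u _ => Finset.sum_congr rfl fun a _ => by ring
  · refine Finset.sum_congr rfl fun u _ => Finset.sum_congr rfl fun a _ => ?_
    rw [W_comm G y a u]; ring

/-- The identity in terms of rooted forests. -/
lemma main_rooted (v1 v2 v3 v4 : V) (h12 : v1 ≠ v2) (h13 : v1 ≠ v3) (h14 : v1 ≠ v4)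
    (h23 : v2 ≠ v3) (h24 : v2 ≠ v4) (h34 : v3 ≠ v4) :
    WS G y (fun F => RF {v4} F ∧ Conn F v2 v4) *
      WS G y (fun F => RF {v1, v2, v3, v4} F ∧ Conn F v2 v2) =
    WS G y (fun F => RF {v1, v2, v3} F ∧ Conn F v4 v2) *
      WS G y (fun F => RF {v2, v4} F ∧ Conn F v4 v4) +
    WS G y (fun F => RF {v2, v3, v4} F ∧ Conn F v1 v2) *
      WS G y (fun F => RF {v2, v4} F ∧ Conn F v1 v4) +
    WS G y (fun F => RF {v1, v2, v4} F ∧ Conn F v3 v2) *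
      WS G y (fun F => RF {v2, v4} F ∧ Conn F v3 v4) := by
  have hg := green G y (pot G y {v1, v2, v3, v4} v2) (pot G y {v2, v4} v4)
  -- left-hand side
  rw [Finset.sum_eq_single v2, pot_root_current G y (S := {v4}) (by simp) (by simpa using h24)] at hg
  rotate_left
  · intro u _ hu
    by_cases h : u ∈ ({v1, v2, v3, v4} : Finset V)
    · rw [pot_zero G y (by simp) h hu, zero_mul]
    · rw [pot_harmonic G y (by simp) (by simp at h ⊢; tauto), mul_zero]
  · simp
  have hsum : ∀ f : V → R, (∀ u, u ∉ ({v1, v3, v4} : Finset V) → f u = 0) →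
      ∑ u, f u = f v1 + f v3 + f v4 := by
    intro f hf
    rw [← Finset.sum_subset (Finset.subset_univ ({v1, v3, v4} : Finset V)) (fun u _ => hf u),
      Finset.sum_insert (by simp [h13, h14]), Finset.sum_insert (by simp [h34]),
      Finset.sum_singleton]
    ring
  rw [hsum] at hg
  swap
  · intro u hu
    by_cases h : u = v2
    · rw [pot_zero G y (by simp) (by simp [h]) (h ▸ h24), zero_mul]
    · rw [pot_harmonic G y (by simp) (by simp at hu ⊢; tauto), mul_zero]
  have c1 := pot_root_current G y (S := {v2, v3, v4}) (r := v2) (u := v1) (by simp)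
    (by simp [h12, h13, h14])
  have c3 := pot_root_current G y (S := {v1, v2, v4}) (r := v2) (u := v3) (by simp)
    (by simp [h13.symm, h23.symm, h34])
  have c4 := pot_root_current G y (S := {v1, v2, v3}) (r := v2) (u := v4) (by simp)
    (by simp [h14.symm, h24.symm, h34.symm])
  have s3 : insert v3 {v1, v2, v4} = ({v1, v2, v3, v4} : Finset V) := by ext; simp; tauto
  have s4 : insert v4 {v1, v2, v3} = ({v1, v2, v3, v4} : Finset V) := by ext; simp; tauto
  rw [s3] at c3
  rw [s4] at c4
  rw [c1, c3, c4] at hg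
  unfold pot at hg
  linear_combination -hg

end

section
variable {V : Type*} [Fintype V] [DecidableEq V]

/-- Compatibility in terms of `Conn`, without the condition that `F` lies in `G`. -/
def Cp {m : ℕ} (v : Fin m → V) (p : Fin m → Option ℕ) (F : Finset (Sym2 V)) : Prop :=
  (SimpleGraph.fromEdgeSet (F : Set (Sym2 V))).IsAcyclic ∧
  (∀ i j : Fin m, p i ≠ none → p j ≠ none → (Conn F (v i) (v j) ↔ p i = p j)) ∧
  (∀ w : V, ∃ i : Fin m, p i ≠ none ∧ Conn F w (v i))

lemma forestPoly_field {K : Type*} [Field K] (G : SimpleGraph V) [DecidableRel G.Adj]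
    (x : Sym2 V → K) (hx : ∀ e, x e ≠ 0) {m : ℕ} (v : Fin m → V) (p : Fin m → Option ℕ) :
    forestPoly G x v p = (∏ e ∈ G.edgeFinset, x e) * WS G (fun e => (x e)⁻¹) (Cp v p) := by
  classical
  unfold forestPoly WS
  rw [Finset.mul_sum]
  refine Finset.sum_congr rfl fun F hF => ?_
  have hF' := Finset.mem_powerset.1 hF
  have hsub : (F : Set (Sym2 V)) ⊆ G.edgeSet := by
    intro e he
    simpa using hF' he
  have hiff : IsCompatibleForest G v p F ↔ Cp v p F := by
    unfold IsCompatibleForest Cp Conn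
    tauto
  by_cases h : Cp v p F
  · rw [if_pos h, if_pos (hiff.2 h), ← Finset.prod_sdiff hF', mul_assoc, ← Finset.prod_mul_distrib,
      Finset.prod_congr rfl (fun e _ => mul_inv_cancel₀ (hx e)), Finset.prod_const_one, mul_one]
  · rw [if_neg h, if_neg (fun h' => h (hiff.1 h')), mul_zero]

lemma forestPoly_map {R R' : Type*} [CommRing R] [CommRing R'] (f : R →+* R') (G : SimpleGraph V)
    [DecidableRel G.Adj] (x : Sym2 V → R) {m : ℕ} (v : Fin m → V) (p : Fin m → Option ℕ) :
    f (forestPoly G x v p) = forestPoly G (fun e => f (x e)) v p := by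
  classical
  unfold forestPoly
  rw [map_sum]
  refine Finset.sum_congr rfl fun F _ => ?_
  by_cases h : IsCompatibleForest G v p F
  · simp only [if_pos h, map_prod]
  · simp only [if_neg h, map_zero]

/-- The identity over a ring. -/
def Ident {R : Type*} [CommRing R] (G : SimpleGraph V) [DecidableRel G.Adj] (x : Sym2 V → R)
    (v : Fin 4 → V) : Prop :=
  forestPoly G x v ![some 1, some 1, some 1, some 1] *
      forestPoly G x v ![some 1, some 2, some 3, some 4] =
    forestPoly G x v ![some 1, some 2, some 3, some 2] *
      (forestPoly G x v ![some 1, some 1, some 1, some 2] +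
        forestPoly G x v ![some 1, some 2, some 1, some 1] +
        forestPoly G x v ![some 1, some 1, some 2, some 2] +
        forestPoly G x v ![some 1, some 2, some 2, some 1]) +
    forestPoly G x v ![some 1, some 1, some 2, some 3] *
      (forestPoly G x v ![some 1, some 2, some 1, some 1] +
        forestPoly G x v ![some 1, some 2, some 2, some 1]) +
    forestPoly G x v ![some 1, some 2, some 2, some 3] *
      (forestPoly G x v ![some 1, some 2, some 1, some 1] +
        forestPoly G x v ![some 1, some 1, some 2, some 2])

/-- Shape of compatibility for four fully constrained vertices. -/
lemma cp_iff (v : Fin 4 → V) (a b c d : ℕ) (F : Finset (Sym2 V)) :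
    Cp v ![some a, some b, some c, some d] F ↔
      (SimpleGraph.fromEdgeSet (F : Set (Sym2 V))).IsAcyclic ∧
      ((Conn F (v 0) (v 1) ↔ a = b) ∧ (Conn F (v 0) (v 2) ↔ a = c) ∧
       (Conn F (v 0) (v 3) ↔ a = d) ∧ (Conn F (v 1) (v 2) ↔ b = c) ∧
       (Conn F (v 1) (v 3) ↔ b = d) ∧ (Conn F (v 2) (v 3) ↔ c = d)) ∧
      (∀ w, Conn F w (v 0) ∨ Conn F w (v 1) ∨ Conn F w (v 2) ∨ Conn F w (v 3)) := by
  have hc : ∀ x y, Conn F x y ↔ Conn F y x := fun x y => ⟨Conn.symm, Conn.symm⟩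
  have hr : ∀ x, Conn F x x := fun x => Conn.rfl'
  unfold Cp
  refine and_congr_right fun _ => and_congr ?_ (forall_congr' fun w => ?_)
  · constructor
    · intro h
      refine ⟨?_, ?_, ?_, ?_, ?_, ?_⟩
      · simpa using h 0 1
      · simpa using h 0 2
      · simpa using h 0 3
      · simpa using h 1 2
      · simpa using h 1 3
      · simpa using h 2 3
    · rintro ⟨h1, h2, h3, h4, h5, h6⟩ i j _ _
      fin_cases i <;> fin_cases j <;> simp [hr, h1, h2, h3, h4, h5, h6, hc (v 1) (v 0),
        hc (v 2) (v 0), hc (v 3) (v 0), hc (v 2) (v 1), hc (v 3) (v 1), hc (v 3) (v 2)] <;>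
        exact eq_comm
  · simp [Fin.exists_fin_succ]

lemma ident_field {K : Type*} [Field K] (G : SimpleGraph V) [DecidableRel G.Adj]
    (x : Sym2 V → K) (hx : ∀ e, x e ≠ 0) (v : Fin 4 → V) (hv : Function.Injective v) :
    Ident G x v := by
  have hm := main_rooted G (fun e => (x e)⁻¹) (v 0) (v 1) (v 2) (v 3)
    (hv.ne (by decide)) (hv.ne (by decide)) (hv.ne (by decide)) (hv.ne (by decide))
    (hv.ne (by decide)) (hv.ne (by decide))
  have n01 : v 0 ≠ v 1 := hv.ne (by decide)
  have n02 : v 0 ≠ v 2 := hv.ne (by decide)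
  have n03 : v 0 ≠ v 3 := hv.ne (by decide)
  have n12 : v 1 ≠ v 2 := hv.ne (by decide)
  have n13 : v 1 ≠ v 3 := hv.ne (by decide)
  have n23 : v 2 ≠ v 3 := hv.ne (by decide)
  set y := fun e => (x e)⁻¹ with hy
  have hc : ∀ (F : Finset (Sym2 V)) x y, Conn F x y → Conn F y x := fun F x y => Conn.symm
  have ht : ∀ (F : Finset (Sym2 V)) x y z, Conn F x y → Conn F y z → Conn F x z :=
    fun F x y z => Conn.trans
  have hr : ∀ (F : Finset (Sym2 V)) x, Conn F x x := fun F x => Conn.rfl'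
  have e1 : WS G y (fun F => RF {v 3} F ∧ Conn F (v 1) (v 3)) =
      WS G y (Cp v ![some 1, some 1, some 1, some 1]) := by
    refine WS_congr G y fun F => ?_
    rw [cp_iff]; unfold RF; simp
    grind
  have e2 : WS G y (fun F => RF {v 0, v 1, v 2, v 3} F ∧ Conn F (v 1) (v 1)) =
      WS G y (Cp v ![some 1, some 2, some 3, some 4]) := by
    refine WS_congr G y fun F => ?_
    rw [cp_iff]; unfold RF; simp
    grind
  have a5 : WS G y (fun F => RF {v 0, v 1, v 2} F ∧ Conn F (v 3) (v 1)) =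
      WS G y (Cp v ![some 1, some 2, some 3, some 2]) := by
    refine WS_congr G y fun F => ?_
    rw [cp_iff]; unfold RF; simp
    grind
  have a1 : WS G y (fun F => RF {v 1, v 2, v 3} F ∧ Conn F (v 0) (v 1)) =
      WS G y (Cp v ![some 1, some 1, some 2, some 3]) := by
    refine WS_congr G y fun F => ?_
    rw [cp_iff]; unfold RF; simp
    grind
  have a3 : WS G y (fun F => RF {v 0, v 1, v 3} F ∧ Conn F (v 2) (v 1)) =
      WS G y (Cp v ![some 1, some 2, some 2, some 3]) := by
    refine WS_congr G y fun F => ?_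
    rw [cp_iff]; unfold RF; simp
    grind
  have b1 : WS G y (fun F => RF {v 1, v 3} F ∧ Conn F (v 0) (v 3)) =
      WS G y (Cp v ![some 1, some 2, some 1, some 1]) +
      WS G y (Cp v ![some 1, some 2, some 2, some 1]) := by
    refine WS_add G y (fun F => ?_) (fun F => ?_)
    · rw [cp_iff, cp_iff]; unfold RF; simp
      grind
    · rw [cp_iff, cp_iff]; simp; grind
  have b3 : WS G y (fun F => RF {v 1, v 3} F ∧ Conn F (v 2) (v 3)) =
      WS G y (Cp v ![some 1, some 2, some 1, some 1]) +
      WS G y (Cp v ![some 1, some 1, some 2, some 2]) := by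
    refine WS_add G y (fun F => ?_) (fun F => ?_)
    · rw [cp_iff, cp_iff]; unfold RF; simp
      grind
    · rw [cp_iff, cp_iff]; simp; grind
  have b4' : WS G y (fun F => RF {v 1, v 3} F ∧ Conn F (v 0) (v 1)) =
      WS G y (Cp v ![some 1, some 1, some 1, some 2]) +
      WS G y (Cp v ![some 1, some 1, some 2, some 2]) := by
    refine WS_add G y (fun F => ?_) (fun F => ?_)
    · rw [cp_iff, cp_iff]; unfold RF; simp
      grind
    · rw [cp_iff, cp_iff]; simp; grind
  have b4 : WS G y (fun F => RF {v 1, v 3} F ∧ Conn F (v 3) (v 3)) =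
      WS G y (fun F => RF {v 1, v 3} F ∧ Conn F (v 0) (v 3)) +
      WS G y (fun F => RF {v 1, v 3} F ∧ Conn F (v 0) (v 1)) := by
    refine WS_add G y (fun F => ?_) (fun F => ?_)
    · unfold RF; simp
      grind
    · unfold RF; simp; grind
  rw [b4, b4', b1, b3, a1, a3, a5, e1, e2] at hm
  unfold Ident
  simp only [forestPoly_field G x hx, ← hy]
  linear_combination (∏ e ∈ G.edgeFinset, x e) ^ 2 * hm

lemma ident_map {R R' : Type*} [CommRing R] [CommRing R'] (f : R →+* R') (G : SimpleGraph V)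
    [DecidableRel G.Adj] (x : Sym2 V → R) (v : Fin 4 → V) (h : Ident G x v) :
    Ident G (fun e => f (x e)) v := by
  have := congrArg f h
  unfold Ident
  simpa only [map_mul, map_add, forestPoly_map] using this

lemma ident_of_map {R R' : Type*} [CommRing R] [CommRing R'] (f : R →+* R')
    (hf : Function.Injective f) (G : SimpleGraph V)
    [DecidableRel G.Adj] (x : Sym2 V → R) (v : Fin 4 → V) (h : Ident G (fun e => f (x e)) v) :
    Ident G x v := by
  apply hf
  unfold Ident at h
  simpa only [map_mul, map_add, forestPoly_map] using h

lemma ident {R : Type*} [CommRing R] (G : SimpleGraph V) [DecidableRel G.Adj]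
    (x : Sym2 V → R) (v : Fin 4 → V) (hv : Function.Injective v) : Ident G x v := by
  have h1 : Ident G (fun e => (MvPolynomial.X e : MvPolynomial (Sym2 V) ℤ)) v := by
    refine ident_of_map (algebraMap _ (FractionRing (MvPolynomial (Sym2 V) ℤ)))
      (IsFractionRing.injective _ _) G _ v (ident_field G _ (fun e => ?_) v hv)
    rw [Ne, IsFractionRing.to_map_eq_zero_iff]
    exact MvPolynomial.X_ne_zero e
  have h2 := ident_map (MvPolynomial.eval₂Hom (Int.castRingHom R) x) G _ v h1
  simpa using h2

end

end L44

/-- **The identity `𝓛_{4,4}(2)`** for `m = 4` marked vertices on any graph: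
`Φ_{(1,1,1,1)} Φ_{(1,2,3,4)} = A₅(B₁+B₃+B₅+B₇) + A₁(B₃+B₇) + A₃(B₃+B₅)` with
`A₁ = Φ_{(1,1,2,3)}`, `A₃ = Φ_{(1,2,2,3)}`, `A₅ = Φ_{(1,2,3,2)}`,
`B₁ = Φ_{(1,1,1,2)}`, `B₃ = Φ_{(1,2,1,1)}`, `B₅ = Φ_{(1,1,2,2)}`, `B₇ = Φ_{(1,2,2,1)}`. -/
theorem L44_2_identity {V : Type*} [Fintype V] [DecidableEq V] {R : Type*}
    [CommRing R] (G : SimpleGraph V) [DecidableRel G.Adj] (x : Sym2 V → R)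
    (v : Fin 4 → V) (hv : Function.Injective v) :
    let Φ : (Fin 4 → Option ℕ) → R := fun p => forestPoly G x v p
    let A1 := Φ ![some 1, some 1, some 2, some 3]
    let A3 := Φ ![some 1, some 2, some 2, some 3]
    let A5 := Φ ![some 1, some 2, some 3, some 2]
    let B1 := Φ ![some 1, some 1, some 1, some 2]
    let B3 := Φ ![some 1, some 2, some 1, some 1]
    let B5 := Φ ![some 1, some 1, some 2, some 2]
    let B7 := Φ ![some 1, some 2, some 2, some 1]
    Φ ![some 1, some 1, some 1, some 1] * Φ ![some 1, some 2, some 3, some 4] =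
      A5 * (B1 + B3 + B5 + B7) + A1 * (B3 + B7) + A3 * (B3 + B5) := by
  exact L44.ident G x v hv
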